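/- arXiv:2008.06200 — 5 statements merged into one kernel-verified Lean document; each statement's English description precedes it below -/
import Mathlib

section
/- For every real s > 1, the function f(p) = (-ln p)^(s-1) / (ζ(s) Γ(s) (1-p)) is nonnegative on (0,1) and satisfies ∫₀¹ f(p) dp = 1; i.e., it is a genuine probability density function on (0,1). -/
open MeasureTheory

/-- The Riemann zeta function for real `s > 1`, defined as `∑_{x=0}^∞ (x+1)^(-s)`. -/
noncomputable def zetaS (s : ℝ) : ℝ := ∑' x : ℕ, ((x : ℝ) + 1) ^ (-s)

lemma zetaS_summable (s : ℝ) (hs : 1 < s) : Summable fun x : ℕ => ((x : ℝ) + 1) ^ (-s) := by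
  have h := (summable_nat_add_iff 1).2 (Real.summable_nat_rpow.2 (show -s < -1 by linarith))
  simpa using h

lemma zetaS_pos (s : ℝ) (hs : 1 < s) : 0 < zetaS s :=
  (zetaS_summable s hs).tsum_pos (fun x => by positivity) 0 (by positivity)

lemma bose_integral (s : ℝ) (hs : 1 < s) :
    ∫ t in Set.Ioi (0 : ℝ), t ^ (s - 1) * (Real.exp (-t) / (1 - Real.exp (-t)))
      = zetaS s * Real.Gamma s := by
  have hs0 : 0 < s := by linarith
  have hG := Real.Gamma_pos_of_pos hs0
  have key : ∀ i : ℕ, ∫ t in Set.Ioi (0 : ℝ), t ^ (s - 1) * Real.exp (-(((i : ℝ) + 1) * t))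
      = ((i : ℝ) + 1) ^ (-s) * Real.Gamma s := by
    intro i
    rw [Real.integral_rpow_mul_exp_neg_mul_Ioi hs0 (by positivity), one_div,
      Real.inv_rpow (by positivity), Real.rpow_neg (by positivity)]
  have h := hasSum_integral_of_summable_integral_norm
    (μ := volume.restrict (Set.Ioi (0 : ℝ)))
    (F := fun (i : ℕ) (t : ℝ) => t ^ (s - 1) * Real.exp (-(((i : ℝ) + 1) * t)))
    (fun i => .of_integral_ne_zero (by rw [key]; positivity))
    (by
      refine ((zetaS_summable s hs).mul_right (Real.Gamma s)).congr fun i => ?_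
      rw [← key i]
      refine setIntegral_congr_fun measurableSet_Ioi fun t ht => ?_
      have ht : 0 < t := ht
      exact (Real.norm_of_nonneg (by positivity)).symm)
  have h2 := h.tsum_eq
  simp only [key] at h2
  rw [tsum_mul_right] at h2
  rw [zetaS, h2]
  refine setIntegral_congr_fun measurableSet_Ioi fun t ht => ?_
  have ht : 0 < t := ht
  have hlt : Real.exp (-t) < 1 := by rw [Real.exp_lt_one_iff]; linarith
  have hg := (hasSum_geometric_of_lt_one (Real.exp_pos (-t)).le hlt).mul_left (Real.exp (-t))
  rw [tsum_mul_left, div_eq_mul_inv, ← hg.tsum_eq]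
  congr 1
  refine tsum_congr fun i => ?_
  rw [← Real.exp_nat_mul, ← Real.exp_add]
  congr 1
  ring

/-- The mixing density `f(p) = (-ln p)^(s-1) / (ζ(s) Γ(s) (1-p))` is a genuine
probability density on `(0,1)`: it is nonnegative there and integrates to 1. -/
theorem geometric_mixing_density_is_pdf (s : ℝ) (hs : 1 < s) :
    (∀ p ∈ Set.Ioo (0 : ℝ) 1,
        0 ≤ (-Real.log p) ^ (s - 1) / (zetaS s * Real.Gamma s * (1 - p))) ∧
    ∫ p in Set.Ioo (0 : ℝ) 1,
        (-Real.log p) ^ (s - 1) / (zetaS s * Real.Gamma s * (1 - p)) = 1 := by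
  have hz := zetaS_pos s hs
  have hG := Real.Gamma_pos_of_pos (show 0 < s by linarith)
  refine ⟨fun p hp => ?_, ?_⟩
  · have h1 : 0 < 1 - p := by linarith [hp.2]
    have h2 : 0 ≤ -Real.log p := by linarith [Real.log_nonpos hp.1.le hp.2.le]
    positivity
  · have him : (fun t : ℝ => Real.exp (-t)) '' Set.Ioi 0 = Set.Ioo 0 1 := by
      ext p
      constructor
      · rintro ⟨t, ht, rfl⟩
        have ht : 0 < t := ht
        exact ⟨Real.exp_pos _, by simpa using ht⟩
      · intro hp
        exact ⟨-Real.log p, by simpa using Real.log_neg hp.1 hp.2,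
          by simp [Real.exp_log hp.1]⟩
    rw [← him, integral_image_eq_integral_abs_deriv_smul (f' := fun t => -Real.exp (-t))
      measurableSet_Ioi
      (fun t _ => by
        simpa using ((hasDerivAt_neg t).exp).hasDerivWithinAt)
      (fun a _ b _ hab => by simpa using hab)]
    have hb := bose_integral s hs
    have hne : zetaS s * Real.Gamma s ≠ 0 := by positivity
    have hd := div_self hne
    nth_rewrite 1 [← hb] at hd
    rw [← integral_div] at hd
    refine Eq.trans ?_ hd
    refine setIntegral_congr_fun measurableSet_Ioi fun t ht => ?_
    simp only [abs_neg, Real.abs_exp, Real.log_exp, neg_neg, smul_eq_mul]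
    rw [mul_comm (zetaS s * Real.Gamma s), ← div_div]
    ring
end

section
/- For every real s > 1 and every natural number x, the x-th moment of the mixing density f(p) = (-ln p)^(s-1) / (ζ(s) Γ(s) (1-p)) on (0,1) satisfies ∫₀¹ p^x f(p) dp = 1 - (1/ζ(s)) Σ_{i=0}^{x-1} (i+1)^(-s), which equals ζ(s, x+1)/ζ(s), where ζ(s, x+1) = Σ_{i=x}^∞ (i+1)^(-s) is the Hurwitz zeta function. -/
open MeasureTheory

/-- The Hurwitz zeta function `ζ(s, n+1) = ∑_{i=n}^∞ (i+1)^(-s)`. -/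
noncomputable def hurwitzS (s : ℝ) (n : ℕ) : ℝ := ∑' i : ℕ, ((n : ℝ) + (i : ℝ) + 1) ^ (-s)

lemma summable_zetaS (s : ℝ) (hs : 1 < s) : Summable (fun i : ℕ => ((i : ℝ) + 1) ^ (-s)) := by
  have h := (Real.summable_one_div_nat_add_rpow 1 s).2 hs
  refine h.congr fun i => ?_
  have : (0 : ℝ) < (i : ℝ) + 1 := by positivity
  rw [abs_of_pos this, Real.rpow_neg this.le, one_div]

lemma zetaS_split (s : ℝ) (hs : 1 < s) (x : ℕ) :
    ∑ i ∈ Finset.range x, ((i : ℝ) + 1) ^ (-s) + hurwitzS s x = zetaS s := by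
  have h := (summable_zetaS s hs).sum_add_tsum_nat_add x
  rw [zetaS, ← h, hurwitzS]
  congr 1
  refine tsum_congr fun i => ?_
  push_cast
  rw [add_comm (x : ℝ)]

lemma image_exp_neg : (fun t : ℝ => Real.exp (-t)) '' Set.Ioi 0 = Set.Ioo 0 1 := by
  ext p
  constructor
  · rintro ⟨t, ht, rfl⟩
    have : 0 < t := ht
    exact ⟨Real.exp_pos _, by simpa using this⟩
  · rintro ⟨h0, h1⟩
    refine ⟨-Real.log p, ?_, by simp [Real.exp_log h0]⟩
    simpa using Real.log_neg h0 h1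

lemma core_integral (s : ℝ) (hs : 1 < s) (x : ℕ) :
    ∫ t in Set.Ioi (0 : ℝ), ∑' i : ℕ, t ^ (s - 1) * Real.exp (-(((x : ℝ) + i + 1) * t))
      = hurwitzS s x * Real.Gamma s := by
  have key : ∀ i : ℕ, ∫ t in Set.Ioi (0 : ℝ), t ^ (s - 1) * Real.exp (-(((x : ℝ) + i + 1) * t))
      = ((x : ℝ) + i + 1) ^ (-s) * Real.Gamma s := by
    intro i
    have hp : (0 : ℝ) < (x : ℝ) + i + 1 := by positivity
    rw [Real.integral_rpow_mul_exp_neg_mul_Ioi (by linarith) hp, one_div, Real.inv_rpow hp.le,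
      Real.rpow_neg hp.le]
  have hG : 0 < Real.Gamma s := Real.Gamma_pos_of_pos (by linarith)
  have hsum : Summable fun i : ℕ => ((x : ℝ) + i + 1) ^ (-s) := by
    have := (summable_nat_add_iff x).2 (summable_zetaS s hs)
    refine this.congr fun i => ?_
    push_cast
    rw [add_comm (x : ℝ)]
  rw [← integral_tsum_of_summable_integral_norm]
  · simp_rw [key]
    rw [tsum_mul_right, hurwitzS]
  · intro i
    refine .of_integral_ne_zero ?_
    rw [key]
    positivity
  · refine (hsum.mul_right (Real.Gamma s)).congr fun i => ?_
    rw [← key]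
    refine setIntegral_congr_fun measurableSet_Ioi fun t ht => ?_
    have : 0 < t := ht
    exact (Real.norm_of_nonneg (by positivity)).symm

lemma moment_eq (s : ℝ) (hs : 1 < s) (x : ℕ) :
    ∫ p in Set.Ioo (0 : ℝ) 1,
        p ^ x * ((-Real.log p) ^ (s - 1) / (zetaS s * Real.Gamma s * (1 - p)))
      = hurwitzS s x / zetaS s := by
  have hG : 0 < Real.Gamma s := Real.Gamma_pos_of_pos (by linarith)
  have hz := zetaS_pos s hs
  rw [← image_exp_neg, integral_image_eq_integral_abs_deriv_smul (f' := fun t => -Real.exp (-t))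
    measurableSet_Ioi]
  · have : hurwitzS s x / zetaS s
        = (1 / (zetaS s * Real.Gamma s)) * (hurwitzS s x * Real.Gamma s) := by
      field_simp
    rw [this, ← core_integral s hs, ← integral_const_mul]
    refine setIntegral_congr_fun measurableSet_Ioi fun t ht => ?_
    have ht : 0 < t := ht
    have h1 : Real.exp (-t) < 1 := by simpa using ht
    have h2 : 1 - Real.exp (-t) ≠ 0 := by linarith
    have e : ∀ i : ℕ, t ^ (s - 1) * Real.exp (-(((x : ℝ) + i + 1) * t))
        = (t ^ (s - 1) * Real.exp (-t) ^ (x + 1)) * Real.exp (-t) ^ i := by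
      intro i
      rw [mul_assoc, ← pow_add, ← Real.exp_nat_mul]
      congr 2
      push_cast
      ring
    simp only [e]
    rw [tsum_mul_left, tsum_geometric_of_lt_one (Real.exp_pos _).le h1, abs_neg, Real.abs_exp,
      Real.log_exp, neg_neg, smul_eq_mul, pow_succ]
    field_simp
  · intro t _
    have := ((Real.hasDerivAt_exp (-t)).comp t (hasDerivAt_neg t)).hasDerivWithinAt (s := Set.Ioi 0)
    simpa using! this
  · intro a _ b _ h
    simpa using h

/-- The `x`-th moment of the mixing density `f(p) = (-ln p)^(s-1)/(ζ(s)Γ(s)(1-p))`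
equals `1 - (1/ζ(s)) ∑_{i=0}^{x-1} (i+1)^(-s)`, which in turn equals
`ζ(s, x+1)/ζ(s)`. -/
theorem geometric_mixing_density_moments (s : ℝ) (hs : 1 < s) (x : ℕ) :
    (∫ p in Set.Ioo (0 : ℝ) 1,
        p ^ x * ((-Real.log p) ^ (s - 1) / (zetaS s * Real.Gamma s * (1 - p)))
      = 1 - (1 / zetaS s) * ∑ i ∈ Finset.range x, ((i : ℝ) + 1) ^ (-s)) ∧
    1 - (1 / zetaS s) * ∑ i ∈ Finset.range x, ((i : ℝ) + 1) ^ (-s)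
      = hurwitzS s x / zetaS s := by
  have h2 : 1 - (1 / zetaS s) * ∑ i ∈ Finset.range x, ((i : ℝ) + 1) ^ (-s)
      = hurwitzS s x / zetaS s := by
    have hz := zetaS_pos s hs
    have := zetaS_split s hs x
    field_simp
    linarith
  exact ⟨(moment_eq s hs x).trans h2.symm, h2⟩
end

section
/- For every real s > 1 and every real t, the moment-generating function of the mixing density f(p) = (-ln p)^(s-1) / (ζ(s) Γ(s) (1-p)) on (0,1) satisfies ∫₀¹ e^{tp} f(p) dp = Σ_{n=0}^∞ (t^n / n!) · ζ(s, n+1)/ζ(s), where ζ(s, n+1) = Σ_{i=n}^∞ (i+1)^(-s) is the Hurwitz zeta function; in particular, this series converges for every real t. -/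
open MeasureTheory

lemma aux_integrable (s : ℝ) (hs : 1 < s) (c : ℝ) (hc : 0 < c) :
    IntegrableOn (fun u : ℝ => u ^ (s - 1) * Real.exp (-(c * u))) (Set.Ioi 0) := by
  have := integrableOn_rpow_mul_exp_neg_mul_rpow (p := 1) (s := s - 1) (b := c)
    (by linarith) one_pos hc
  simpa using this

lemma aux_integral (s : ℝ) (hs : 1 < s) (c : ℝ) (hc : 0 < c) :
    ∫ u in Set.Ioi (0 : ℝ), u ^ (s - 1) * Real.exp (-(c * u)) = c ^ (-s) * Real.Gamma s := by
  rw [Real.integral_rpow_mul_exp_neg_mul_Ioi (by linarith) hc, one_div,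
    Real.inv_rpow hc.le, Real.rpow_neg hc.le]

lemma aux_summable_zeta (s : ℝ) (hs : 1 < s) :
    Summable (fun x : ℕ => ((x : ℝ) + 1) ^ (-s)) := by
  have := (Real.summable_one_div_nat_add_rpow 1 s).2 hs
  refine this.congr fun x => ?_
  have h : (0 : ℝ) < (x : ℝ) + 1 := by positivity
  rw [abs_of_pos h, one_div, Real.rpow_neg h.le]

lemma aux_summable_prod (s : ℝ) (hs : 1 < s) (t : ℝ) (ht : 0 ≤ t) :
    Summable (fun q : ℕ × ℕ => t ^ q.1 / (Nat.factorial q.1 : ℝ) *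
      ((q.1 : ℝ) + (q.2 : ℝ) + 1) ^ (-s)) := by
  have h := (Real.summable_pow_div_factorial t).mul_of_nonneg (aux_summable_zeta s hs)
    (fun n => by positivity) (fun n => by positivity)
  refine Summable.of_nonneg_of_le (fun q => by positivity) (fun q => ?_) h
  refine mul_le_mul_of_nonneg_left ?_ (by positivity)
  refine Real.rpow_le_rpow_of_nonpos (by positivity) ?_ (by linarith)
  have : (0 : ℝ) ≤ (q.1 : ℝ) := by positivity
  linarith

lemma aux_pointwise (s t u : ℝ) (hu : 0 < u) :
    ∑' q : ℕ × ℕ, t ^ q.1 / (Nat.factorial q.1 : ℝ) *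
      (u ^ (s - 1) * Real.exp (-(((q.1 : ℝ) + (q.2 : ℝ) + 1) * u)))
      = Real.exp (-u) * (Real.exp (t * Real.exp (-u)) * (u ^ (s - 1) / (1 - Real.exp (-u)))) := by
  have hlt : Real.exp (-u) < 1 := by simpa using hu
  have hpos := Real.exp_pos (-u)
  have h1 : HasSum (fun n : ℕ => (t * Real.exp (-u)) ^ n / (Nat.factorial n : ℝ))
      (Real.exp (t * Real.exp (-u))) := by
    rw [Real.exp_eq_exp_ℝ]
    exact NormedSpace.expSeries_div_hasSum_exp _
  have h2 := hasSum_geometric_of_lt_one hpos.le hlt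
  have h3 := h1.mul h2 (summable_mul_of_summable_norm h1.summable.norm h2.summable.norm)
  have h4 := h3.mul_left (u ^ (s - 1) * Real.exp (-u))
  rw [← show _ = _ from h4.tsum_eq.symm.trans (tsum_congr fun q => ?_)]
  · ring
  · have : Real.exp (-(((q.1 : ℝ) + (q.2 : ℝ) + 1) * u))
        = Real.exp (-u) ^ q.1 * Real.exp (-u) ^ q.2 * Real.exp (-u) := by
      rw [← Real.exp_nat_mul, ← Real.exp_nat_mul, ← Real.exp_add, ← Real.exp_add]
      ring_nf
    rw [this, mul_pow]
    ring

lemma aux_image : (fun u : ℝ => Real.exp (-u)) '' Set.Ioi 0 = Set.Ioo 0 1 := by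
  ext p
  constructor
  · rintro ⟨u, hu, rfl⟩
    exact ⟨Real.exp_pos _, by simpa using hu⟩
  · rintro ⟨h0, h1⟩
    exact ⟨-Real.log p, by simpa using Real.log_neg h0 h1, by simp [Real.exp_log h0]⟩

lemma aux_main (s : ℝ) (hs : 1 < s) (t : ℝ) :
    HasSum (fun q : ℕ × ℕ => t ^ q.1 / (Nat.factorial q.1 : ℝ) *
      (((q.1 : ℝ) + (q.2 : ℝ) + 1) ^ (-s) * Real.Gamma s))
    (∫ p in Set.Ioo (0 : ℝ) 1, Real.exp (t * p) * ((-Real.log p) ^ (s - 1) / (1 - p))) := by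
  have key := hasSum_integral_of_summable_integral_norm (μ := volume.restrict (Set.Ioi (0 : ℝ)))
    (F := fun (q : ℕ × ℕ) (u : ℝ) => t ^ q.1 / (Nat.factorial q.1 : ℝ) *
      (u ^ (s - 1) * Real.exp (-(((q.1 : ℝ) + (q.2 : ℝ) + 1) * u))))
    (fun q => (aux_integrable s hs _ (by positivity)).const_mul _) ?_
  · have e1 : ∀ q : ℕ × ℕ, ∫ u in Set.Ioi (0 : ℝ), t ^ q.1 / (Nat.factorial q.1 : ℝ) *
      (u ^ (s - 1) * Real.exp (-(((q.1 : ℝ) + (q.2 : ℝ) + 1) * u))) =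
      t ^ q.1 / (Nat.factorial q.1 : ℝ) *
      (((q.1 : ℝ) + (q.2 : ℝ) + 1) ^ (-s) * Real.Gamma s) := fun q => by
      rw [integral_const_mul, aux_integral s hs _ (by positivity)]
    simp only [e1] at key
    refine (congrArg (HasSum _) ?_).mpr key
    rw [← aux_image, integral_image_eq_integral_abs_deriv_smul (f' := fun u => -Real.exp (-u))
      measurableSet_Ioi]
    · refine setIntegral_congr_fun measurableSet_Ioi fun u hu => ?_
      simp only [aux_pointwise s t u hu, abs_neg, abs_of_pos (Real.exp_pos _), Real.log_exp,
        neg_neg, smul_eq_mul]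
    · intro u _
      simpa using ((hasDerivAt_neg u).exp).hasDerivWithinAt
    · intro a _ b _ h
      simpa using h
  · refine ((aux_summable_prod s hs |t| (abs_nonneg t)).mul_right (Real.Gamma s)).congr fun q => ?_
    rw [mul_assoc, ← aux_integral s hs _ (by positivity), ← integral_const_mul]
    refine setIntegral_congr_fun measurableSet_Ioi fun u hu => ?_
    have hu' : (0 : ℝ) < u := hu
    simp only [norm_mul, norm_div, norm_pow, Real.norm_eq_abs, Nat.abs_cast,
      abs_of_pos (Real.exp_pos _), abs_of_pos (Real.rpow_pos_of_pos hu' _)]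

/-- The moment-generating function of the mixing density
`f(p) = (-ln p)^(s-1)/(ζ(s)Γ(s)(1-p))` satisfies
`∫₀¹ e^{tp} f(p) dp = ∑_{n=0}^∞ (t^n/n!) ζ(s,n+1)/ζ(s)`, the series
converging for every real `t`. -/
theorem geometric_mixing_density_mgf (s : ℝ) (hs : 1 < s) (t : ℝ) :
    Summable (fun n : ℕ => t ^ n / (Nat.factorial n : ℝ) * (hurwitzS s n / zetaS s)) ∧
    ∫ p in Set.Ioo (0 : ℝ) 1,
        Real.exp (t * p) *
          ((-Real.log p) ^ (s - 1) / (zetaS s * Real.Gamma s * (1 - p)))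
      = ∑' n : ℕ, t ^ n / (Nat.factorial n : ℝ) * (hurwitzS s n / zetaS s) := by
  have hG : 0 < Real.Gamma s := Real.Gamma_pos_of_pos (by linarith)
  have hm := (aux_main s hs t).mul_right (zetaS s * Real.Gamma s)⁻¹
  have hfib := hm.prod_fiberwise (g := fun n : ℕ =>
    t ^ n / (Nat.factorial n : ℝ) * (hurwitzS s n / zetaS s)) (fun n => by
      have hsm : Summable (fun i : ℕ => ((n : ℝ) + (i : ℝ) + 1) ^ (-s)) := by
        refine Summable.of_nonneg_of_le (fun i => by positivity) (fun i => ?_)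
          (aux_summable_zeta s hs)
        refine Real.rpow_le_rpow_of_nonpos (by positivity) ?_ (by linarith)
        have : (0 : ℝ) ≤ (n : ℝ) := by positivity
        linarith
      have h := hsm.hasSum.mul_left (t ^ n / (Nat.factorial n : ℝ) / zetaS s)
      convert h using 1
      · funext i
        field_simp
      · unfold hurwitzS
        ring)
  refine ⟨hfib.summable, ?_⟩
  rw [hfib.tsum_eq, ← integral_mul_const]
  refine setIntegral_congr_fun measurableSet_Ioo fun p hp => ?_
  simp only [div_eq_mul_inv, mul_inv]
  ring
end

section
/- For every real s > 1, every real r > 1, and every natural number x, ∫₀¹ [Γ(r+x)/(Γ(r)Γ(x+1))] p^x (1-p)^r · [ (r-1) / (ζ(s) Γ(s) (1-p)^r) · ∫_p^1 (ω-p)^(r-2) (-ln ω)^(s-1) / ω^(r-1) dω ] dp = (x+1)^(-s) / ζ(s). That is, the Zeta(s) probability mass function is the continuous mixture of Negative Binomial(r,p) probability mass functions with mixing density f(p) = (r-1)/(ζ(s)Γ(s)(1-p)^r) · ∫_p^1 (ω-p)^(r-2) (-ln ω)^(s-1) / ω^(r-1) dω on (0,1). -/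
open MeasureTheory

lemma aux_beta (r : ℝ) (hr : 1 < r) (x : ℕ) (w : ℝ) (hw : 0 < w) :
    ∫ p in Set.Ioo (0 : ℝ) w, p ^ x * (w - p) ^ (r - 2)
      = w ^ ((x : ℝ) + r - 1) *
        (Real.Gamma ((x : ℝ) + 1) * Real.Gamma (r - 1) / Real.Gamma (r + x)) := by
  have h := Complex.betaIntegral_scaled ((x : ℂ) + 1) ((r : ℂ) - 1) hw
  have hb : Complex.betaIntegral ((x : ℂ) + 1) ((r : ℂ) - 1) =
      ((Real.Gamma ((x : ℝ) + 1) * Real.Gamma (r - 1) / Real.Gamma (r + x) : ℝ) : ℂ) := by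
    rw [Complex.betaIntegral_eq_Gamma_mul_div]
    · push_cast
      simp only [← Complex.Gamma_ofReal]
      push_cast
      congr 2
      ring
    · simp; positivity
    · simpa using hr
  rw [hb, intervalIntegral.integral_of_le hw.le, integral_Ioc_eq_integral_Ioo] at h
  have h2 : ∫ p in Set.Ioo (0 : ℝ) w, (p : ℂ) ^ ((x : ℂ) + 1 - 1) * ((w : ℂ) - p) ^ ((r : ℂ) - 1 - 1)
      = ((∫ p in Set.Ioo (0 : ℝ) w, p ^ x * (w - p) ^ (r - 2) : ℝ) : ℂ) := by
    rw [← integral_complex_ofReal]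
    refine setIntegral_congr_fun measurableSet_Ioo fun p hp => ?_
    have h3 : (0 : ℝ) ≤ w - p := by linarith [hp.2]
    simp only [add_sub_cancel_right, Complex.cpow_natCast]
    push_cast
    rw [Complex.ofReal_cpow h3]
    push_cast
    congr 2
    ring
  rw [h2] at h
  have h4 : (w : ℂ) ^ ((x : ℂ) + 1 + ((r : ℂ) - 1) - 1) = ((w ^ ((x : ℝ) + r - 1) : ℝ) : ℂ) := by
    rw [Complex.ofReal_cpow hw.le]
    push_cast
    congr 1
    ring
  rw [h4] at h
  exact_mod_cast h

lemma aux_gamma (s : ℝ) (hs : 1 < s) (x : ℕ) :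
    ∫ w in Set.Ioo (0 : ℝ) 1, w ^ x * (-Real.log w) ^ (s - 1)
      = Real.Gamma s * ((x : ℝ) + 1) ^ (-s) := by
  have him : (fun t : ℝ => Real.exp (-t)) '' Set.Ioi 0 = Set.Ioo 0 1 := by
    ext w
    constructor
    · rintro ⟨t, ht, rfl⟩
      exact ⟨Real.exp_pos _, by simpa using ht⟩
    · rintro ⟨h0, h1⟩
      exact ⟨-Real.log w, by simpa using Real.log_neg h0 h1, by simp [Real.exp_log h0]⟩
  have hd : ∀ t ∈ Set.Ioi (0 : ℝ), HasDerivWithinAt (fun t : ℝ => Real.exp (-t))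
      (-Real.exp (-t)) (Set.Ioi 0) t := by
    intro t _
    have := ((hasDerivAt_id t).neg).exp
    simpa using this.hasDerivWithinAt
  have hinj : Set.InjOn (fun t : ℝ => Real.exp (-t)) (Set.Ioi 0) := by
    intro a _ b _ hab
    simpa using hab
  rw [← him, integral_image_eq_integral_abs_deriv_smul measurableSet_Ioi hd hinj]
  have hg := integral_rpow_mul_exp_neg_mul_rpow (p := 1) (q := s - 1) (b := (x : ℝ) + 1)
    one_pos (by linarith) (by positivity)
  have : ∫ t in Set.Ioi (0 : ℝ), |(-Real.exp (-t))| • (Real.exp (-t) ^ x * (-Real.log (Real.exp (-t))) ^ (s - 1))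
     = ∫ t in Set.Ioi (0 : ℝ), t ^ (s - 1) * Real.exp (-((x : ℝ) + 1) * t ^ (1 : ℝ)) := by
    refine setIntegral_congr_fun measurableSet_Ioi fun t _ => ?_
    simp only [abs_neg, Real.abs_exp, smul_eq_mul, Real.log_exp, neg_neg, Real.rpow_one]
    rw [← Real.exp_nat_mul, ← mul_assoc, ← Real.exp_add, mul_comm]
    congr 2
    ring
  rw [this, hg]
  simp
  ring

/-- Joint integrand. -/
noncomputable def auxG (s r : ℝ) (x : ℕ) (p w : ℝ) : ℝ :=
  (if p < w then 1 else 0) * (p ^ x * (w - p) ^ (r - 2) * ((-Real.log w) ^ (s - 1) / w ^ (r - 1)))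

lemma auxG_p (s r : ℝ) (x : ℕ) (p : ℝ) (hp : p ∈ Set.Ioo (0 : ℝ) 1) :
    ∫ w in Set.Ioo (0 : ℝ) 1, auxG s r x p w
      = p ^ x * ∫ w in Set.Ioo p 1, (w - p) ^ (r - 2) * (-Real.log w) ^ (s - 1) / w ^ (r - 1) := by
  rw [← integral_const_mul, ← integral_indicator measurableSet_Ioo,
    ← integral_indicator measurableSet_Ioo]
  congr 1
  ext w
  simp only [Set.indicator, Set.mem_Ioo, auxG]
  have := hp.1
  by_cases h1 : p < w
  · have : 0 < w := by linarith
    by_cases h2 : w < 1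
    · simp [*]; ring
    · simp [*]
  · simp [*]

lemma auxG_ind (s r : ℝ) (x : ℕ) (w : ℝ) (hw : w ∈ Set.Ioo (0 : ℝ) 1) (p : ℝ) :
    (Set.Ioo (0 : ℝ) 1).indicator (fun p => auxG s r x p w) p
      = (Set.Ioo (0 : ℝ) w).indicator (fun p => (p ^ x * (w - p) ^ (r - 2)) *
        ((-Real.log w) ^ (s - 1) / w ^ (r - 1))) p := by
  simp only [Set.indicator, Set.mem_Ioo, auxG]
  have := hw.2
  by_cases h1 : p < w
  · have : p < 1 := by linarith
    simp [*]
  · simp [*]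

lemma auxG_w (s r : ℝ) (hr : 1 < r) (x : ℕ) (w : ℝ) (hw : w ∈ Set.Ioo (0 : ℝ) 1) :
    ∫ p in Set.Ioo (0 : ℝ) 1, auxG s r x p w
      = (Real.Gamma ((x : ℝ) + 1) * Real.Gamma (r - 1) / Real.Gamma (r + x)) *
        (w ^ x * (-Real.log w) ^ (s - 1)) := by
  rw [← integral_indicator measurableSet_Ioo, integral_congr_ae (ae_of_all _ (auxG_ind s r x w hw)),
    integral_indicator measurableSet_Ioo, integral_mul_const, aux_beta r hr x w hw.1]
  have h0 := hw.1
  have : w ^ ((x : ℝ) + r - 1) = w ^ x * w ^ (r - 1) := by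
    rw [← Real.rpow_natCast, ← Real.rpow_add h0]; congr 1; ring
  rw [this]
  have : w ^ (r - 1) ≠ 0 := (Real.rpow_pos_of_pos h0 _).ne'
  field_simp

lemma auxG_w_int (s r : ℝ) (hr : 1 < r) (x : ℕ) (w : ℝ) (hw : w ∈ Set.Ioo (0 : ℝ) 1) :
    IntegrableOn (fun p => auxG s r x p w) (Set.Ioo (0 : ℝ) 1) := by
  rw [← integrable_indicator_iff measurableSet_Ioo, funext (auxG_ind s r x w hw),
    integrable_indicator_iff measurableSet_Ioo]
  apply Integrable.mul_const
  apply Integrable.of_integral_ne_zero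
  rw [aux_beta r hr x w hw.1]
  have h1 := Real.Gamma_pos_of_pos (s := r - 1) (by linarith)
  have h2 := Real.Gamma_pos_of_pos (s := r + x) (by positivity)
  have h3 := Real.Gamma_pos_of_pos (s := (x : ℝ) + 1) (by positivity)
  have h4 := Real.rpow_pos_of_pos hw.1 ((x : ℝ) + r - 1)
  positivity

lemma auxG_nonneg (s r : ℝ) (x : ℕ) (p w : ℝ) (hp : p ∈ Set.Ioo (0 : ℝ) 1)
    (hw : w ∈ Set.Ioo (0 : ℝ) 1) : 0 ≤ auxG s r x p w := by
  unfold auxG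
  split_ifs with h
  · have h1 : 0 ≤ w - p := by linarith
    have h2 : 0 ≤ -Real.log w := by linarith [Real.log_neg hw.1 hw.2]
    have := hp.1
    have := hw.1
    positivity
  · simp

lemma auxG_int (s r : ℝ) (hs : 1 < s) (hr : 1 < r) (x : ℕ) :
    Integrable (Function.uncurry (auxG s r x))
      ((volume.restrict (Set.Ioo (0 : ℝ) 1)).prod (volume.restrict (Set.Ioo (0 : ℝ) 1))) := by
  have hm : Measurable (Function.uncurry (auxG s r x)) := by
    unfold auxG Function.uncurry
    refine Measurable.mul ?_ (by fun_prop)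
    exact Measurable.ite (measurableSet_lt measurable_fst measurable_snd) measurable_const
      measurable_const
  rw [integrable_prod_iff' hm.aestronglyMeasurable]
  refine ⟨?_, ?_⟩
  · filter_upwards [ae_restrict_mem measurableSet_Ioo] with w hw
    exact auxG_w_int s r hr x w hw
  · have : IntegrableOn (fun w => (Real.Gamma ((x : ℝ) + 1) * Real.Gamma (r - 1) / Real.Gamma (r + x)) *
        (w ^ x * (-Real.log w) ^ (s - 1))) (Set.Ioo (0 : ℝ) 1) := by
      apply Integrable.const_mul
      apply Integrable.of_integral_ne_zero
      rw [aux_gamma s hs x]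
      have h1 := Real.Gamma_pos_of_pos (s := s) (by linarith)
      positivity
    refine this.congr ?_
    filter_upwards [ae_restrict_mem measurableSet_Ioo] with w hw
    rw [← auxG_w s r hr x w hw]
    refine setIntegral_congr_fun measurableSet_Ioo fun p hp => ?_
    exact (Real.norm_of_nonneg (auxG_nonneg s r x p w hp hw)).symm

/-- The Zeta(s) pmf is the continuous mixture of Negative Binomial(r,p) pmfs,
for fixed shape `r > 1`, with mixing density
`f(p) = (r-1)/(ζ(s)Γ(s)(1-p)^r) ∫_p^1 (ω-p)^(r-2)(-ln ω)^(s-1)/ω^(r-1) dω`. -/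
theorem zeta_as_negBinomial_mixture_r_gt_one (s : ℝ) (hs : 1 < s)
    (r : ℝ) (hr : 1 < r) (x : ℕ) :
    ∫ p in Set.Ioo (0 : ℝ) 1,
      (Real.Gamma (r + x) / (Real.Gamma r * Real.Gamma ((x : ℝ) + 1))) *
        p ^ x * (1 - p) ^ r *
        ((r - 1) / (zetaS s * Real.Gamma s * (1 - p) ^ r) *
          ∫ ω in Set.Ioo p 1,
            (ω - p) ^ (r - 2) * (-Real.log ω) ^ (s - 1) / ω ^ (r - 1))
      = ((x : ℝ) + 1) ^ (-s) / zetaS s := by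
  have h1 : ∫ p in Set.Ioo (0 : ℝ) 1,
      (Real.Gamma (r + x) / (Real.Gamma r * Real.Gamma ((x : ℝ) + 1))) *
        p ^ x * (1 - p) ^ r *
        ((r - 1) / (zetaS s * Real.Gamma s * (1 - p) ^ r) *
          ∫ ω in Set.Ioo p 1,
            (ω - p) ^ (r - 2) * (-Real.log ω) ^ (s - 1) / ω ^ (r - 1))
      = ∫ p in Set.Ioo (0 : ℝ) 1,
        (Real.Gamma (r + x) / (Real.Gamma r * Real.Gamma ((x : ℝ) + 1))) *
        ((r - 1) / (zetaS s * Real.Gamma s)) * ∫ w in Set.Ioo (0 : ℝ) 1, auxG s r x p w := by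
    refine setIntegral_congr_fun measurableSet_Ioo fun p hp => ?_
    have h2 : (1 - p) ^ r ≠ 0 := (Real.rpow_pos_of_pos (by linarith [hp.2]) _).ne'
    simp only [auxG_p s r x p hp]
    rw [← div_div]
    field_simp
  rw [h1, integral_const_mul, integral_integral_swap (auxG_int s r hs hr x),
    setIntegral_congr_fun measurableSet_Ioo (fun w hw => auxG_w s r hr x w hw),
    integral_const_mul, aux_gamma s hs x]
  have hG : Real.Gamma r = (r - 1) * Real.Gamma (r - 1) := by
    have := Real.Gamma_add_one (s := r - 1) (by linarith)
    rwa [sub_add_cancel] at this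
  have g1 := (Real.Gamma_pos_of_pos (s := r - 1) (by linarith)).ne'
  have g2 := (Real.Gamma_pos_of_pos (s := r + x) (by positivity)).ne'
  have g3 := (Real.Gamma_pos_of_pos (s := (x : ℝ) + 1) (by positivity)).ne'
  have g4 := (Real.Gamma_pos_of_pos (s := s) (by linarith)).ne'
  have g5 : r - 1 ≠ 0 := by linarith
  rw [hG]
  field_simp
end

section
/- For every real s > 1, every real r > 1, and every λ > 0, the Gamma-compounded mixing density is invariant in r: ∫₀¹ [((1-p)/p)^r λ^(r-1) / Γ(r)] exp(-((1-p)/p) λ) · [ (r-1)/(ζ(s)Γ(s)(1-p)^r) ∫_p^1 (ω-p)^(r-2) (-ln ω)^(s-1) / ω^(r-1) dω ] dp = (1/(ζ(s)Γ(s))) ∫₀^∞ (ln(y+1))^(s-1) / (y+1) · e^{-λ y} dy, the latter being the value obtained from the case r = 1. -/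
open MeasureTheory

lemma cov_aux (S : Set ℝ) (hS : MeasurableSet S) (hpos : ∀ x ∈ S, 0 < x) (g : ℝ → ℝ) :
    ∫ p in (fun x : ℝ => (1 + x)⁻¹) '' S, g p = ∫ x in S, ((1 + x) ^ 2)⁻¹ * g ((1 + x)⁻¹) := by
  rw [integral_image_eq_integral_abs_deriv_smul (f' := fun x => -((1 + x) ^ 2)⁻¹) hS]
  · refine setIntegral_congr_fun hS fun x hx => ?_
    have := hpos x hx
    simp only [abs_neg, smul_eq_mul]
    rw [abs_of_pos (by positivity)]
  · intro x hx
    have := hpos x hx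
    have h1 : HasDerivAt (fun x : ℝ => 1 + x) 1 x := (hasDerivAt_id x).const_add 1
    have h2 := (h1.fun_inv (by positivity)).hasDerivWithinAt (s := S)
    refine h2.congr_deriv ?_
    rw [neg_div, one_div]
  · intro x _ y _ h
    simpa using h

lemma image_Ioi : (fun x : ℝ => (1 + x)⁻¹) '' Set.Ioi 0 = Set.Ioo 0 1 := by
  ext p
  constructor
  · rintro ⟨x, hx, rfl⟩
    have hx : 0 < x := hx
    exact ⟨by positivity, inv_lt_one_of_one_lt₀ (by linarith)⟩
  · rintro ⟨h0, h1⟩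
    refine ⟨p⁻¹ - 1, ?_, by simp⟩
    have := (one_lt_inv₀ h0).2 h1
    simpa using this

lemma image_Ioo {x : ℝ} (hx : 0 < x) :
    (fun x : ℝ => (1 + x)⁻¹) '' Set.Ioo 0 x = Set.Ioo (1 + x)⁻¹ 1 := by
  ext p
  constructor
  · rintro ⟨y, ⟨hy, hyx⟩, rfl⟩
    refine ⟨?_, inv_lt_one_of_one_lt₀ (by linarith)⟩
    exact inv_strictAnti₀ (by linarith) (by linarith)
  · rintro ⟨h0, h1⟩
    have hp : 0 < p := lt_trans (by positivity) h0
    refine ⟨p⁻¹ - 1, ⟨?_, ?_⟩, by simp⟩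
    · have := (one_lt_inv₀ hp).2 h1
      linarith
    · have := inv_lt_of_inv_lt₀ (by positivity) h0
      linarith

lemma inner_aux (s r x : ℝ) (hx : 0 < x) :
    ∫ ω in Set.Ioo (1 + x)⁻¹ 1,
      (ω - (1 + x)⁻¹) ^ (r - 2) * (-Real.log ω) ^ (s - 1) / ω ^ (r - 1)
    = (1 + x) ^ (2 - r) * ∫ y in Set.Ioo 0 x,
        (Real.log (y + 1)) ^ (s - 1) / (y + 1) * (x - y) ^ (r - 2) := by
  rw [← image_Ioo hx, cov_aux _ measurableSet_Ioo (fun y hy => hy.1), ← integral_const_mul]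
  refine setIntegral_congr_fun measurableSet_Ioo fun y hy => ?_
  obtain ⟨hy, hyx⟩ := hy
  have hx1 : 0 < 1 + x := by linarith
  have hy1 : 0 < 1 + y := by linarith
  have hd : 0 < x - y := by linarith
  have e : (1 + y)⁻¹ - (1 + x)⁻¹ = (x - y) * ((1 + x)⁻¹ * (1 + y)⁻¹) := by
    field_simp
    ring
  rw [e, Real.log_inv, neg_neg, add_comm y 1, Real.mul_rpow hd.le (by positivity),
    Real.mul_rpow (by positivity) (by positivity), Real.inv_rpow hx1.le, ← Real.rpow_neg hx1.le,
    Real.inv_rpow hy1.le, Real.inv_rpow hy1.le, show r - 1 = (r - 2) + 1 by ring,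
    Real.rpow_add hy1, Real.rpow_one, neg_sub]
  have := Real.rpow_pos_of_pos hy1 (r - 2)
  field_simp

theorem gamma_compounded_mixing_density_invariant (s : ℝ) (hs : 1 < s)
    (r : ℝ) (hr : 1 < r) (lam : ℝ) (hlam : 0 < lam) :
    ∫ p in Set.Ioo (0 : ℝ) 1,
        (((1 - p) / p) ^ r * lam ^ (r - 1) / Real.Gamma r) *
            Real.exp (-((1 - p) / p) * lam) *
          ((r - 1) / (zetaS s * Real.Gamma s * (1 - p) ^ r) *
            ∫ ω in Set.Ioo p 1,
              (ω - p) ^ (r - 2) * (-Real.log ω) ^ (s - 1) / ω ^ (r - 1))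
      = (1 / (zetaS s * Real.Gamma s)) *
          ∫ y in Set.Ioi (0 : ℝ),
            (Real.log (y + 1)) ^ (s - 1) / (y + 1) * Real.exp (-lam * y) := by
  have hf : IntegrableOn (fun y : ℝ => (Real.log (y + 1)) ^ (s - 1) / (y + 1) *
      Real.exp (-lam * y)) (Set.Ioi 0) := by
    have h := integrableOn_rpow_mul_exp_neg_mul_rpow (p := 1) (s := s - 1) (b := lam)
      (by linarith) one_pos hlam
    refine Integrable.mono' h (by fun_prop) ?_
    filter_upwards [ae_restrict_mem measurableSet_Ioi] with y hy
    have hy : 0 < y := hy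
    have hl : 0 ≤ Real.log (y + 1) := Real.log_nonneg (by linarith)
    have hl2 : Real.log (y + 1) ≤ y := by
      have := Real.log_le_sub_one_of_pos (show 0 < y + 1 by linarith)
      linarith
    rw [Real.norm_of_nonneg (by positivity), Real.rpow_one]
    gcongr
    calc _ ≤ (Real.log (y + 1)) ^ (s - 1) := div_le_self (by positivity) (by linarith)
      _ ≤ _ := Real.rpow_le_rpow hl hl2 (by linarith)
  have hg : IntegrableOn (fun y : ℝ => y ^ (r - 2) * Real.exp (-(lam * y))) (Set.Ioi 0) := by
    have h := integrableOn_rpow_mul_exp_neg_mul_rpow (p := 1) (s := r - 2) (b := lam)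
      (by linarith) one_pos hlam
    simpa using h
  have hconv := integral_posConvolution hf hg (ContinuousLinearMap.mul ℝ ℝ)
  have hG := Real.integral_rpow_mul_exp_neg_mul_Ioi (a := r - 1) (r := lam) (by linarith) hlam
  rw [show r - 1 - 1 = r - 2 by ring] at hG
  simp only [ContinuousLinearMap.mul_apply'] at hconv
  rw [hG] at hconv
  have hΓ : Real.Gamma r = (r - 1) * Real.Gamma (r - 1) := by
    have := Real.Gamma_add_one (s := r - 1) (by linarith)
    simpa using this
  have hΓp : 0 < Real.Gamma (r - 1) := Real.Gamma_pos_of_pos (by linarith)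
  have hr1 : 0 < r - 1 := by linarith
  have hlp : 0 < lam ^ (r - 1) := by positivity
  rw [← image_Ioi, cov_aux _ measurableSet_Ioi (fun y hy => hy)]
  trans (lam ^ (r - 1) * (r - 1) / (Real.Gamma r * (zetaS s * Real.Gamma s))) *
    ∫ x in Set.Ioi (0 : ℝ), ∫ t in (0:ℝ)..x, (Real.log (t + 1)) ^ (s - 1) / (t + 1) *
      Real.exp (-lam * t) * ((x - t) ^ (r - 2) * Real.exp (-(lam * (x - t))))
  · rw [← integral_const_mul]
    refine setIntegral_congr_fun measurableSet_Ioi fun x hx => ?_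
    have hx : 0 < x := hx
    have hx1 : 0 < 1 + x := by linarith
    rw [inner_aux s r x hx, intervalIntegral.integral_of_le hx.le, integral_Ioc_eq_integral_Ioo]
    have e1 : ∫ t in Set.Ioo 0 x, (Real.log (t + 1)) ^ (s - 1) / (t + 1) *
      Real.exp (-lam * t) * ((x - t) ^ (r - 2) * Real.exp (-(lam * (x - t)))) =
      Real.exp (-x * lam) * ∫ y in Set.Ioo 0 x,
        (Real.log (y + 1)) ^ (s - 1) / (y + 1) * (x - y) ^ (r - 2) := by
      rw [← integral_const_mul]
      congr 1 with t
      rw [show -x * lam = -lam * t + -(lam * (x - t)) by ring, Real.exp_add]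
      ring
    rw [e1]
    have e2 : 1 - (1 + x)⁻¹ = x * (1 + x)⁻¹ := by field_simp; ring
    have e3 : x * (1 + x)⁻¹ / (1 + x)⁻¹ = x := by field_simp
    rw [e2, e3, Real.mul_rpow hx.le (by positivity), Real.inv_rpow hx1.le,
      Real.rpow_sub hx1, Real.rpow_two]
    have h1 := Real.rpow_pos_of_pos hx1 r
    have h2 := Real.rpow_pos_of_pos hx r
    generalize (∫ y in Set.Ioo 0 x, (_ : ℝ)) = I
    generalize zetaS s * Real.Gamma s = Z
    field_simp
  · rw [hconv, hΓ, one_div lam, Real.inv_rpow hlam.le]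
    generalize (∫ y in Set.Ioi (0:ℝ), (_ : ℝ)) = J
    generalize zetaS s * Real.Gamma s = Z
    field_simp
end
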